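/- (Generalised Bel–Matte decomposition) Let X be a (2,2) double form on 4-dimensional Minkowski space and let t : Fin 4 → ℝ satisfy t_{q} t^{q} ≠ 0. Define 𝔄_{ac} = X_{abcd} t^{b} t^{d}, 𝔅_{ac} = −(→⋆X)_{abcd} t^{b} t^{d}, ℭ_{ac} = −(←⋆X)_{abcd} t^{b} t^{d}, 𝔇_{ac} = (⋆⋆X)_{abcd} t^{b} t^{d}, and t_{ab} = t_{a} t_{b}. Then for all a,b,c,d: (t_{q}t^{q})² X_{abcd} = (𝔄 ⊙ t⊗t)_{abcd} + →⋆(𝔅 ⊙ t⊗t)_{abcd} + ←⋆(ℭ ⊙ t⊗t)_{abcd} + ⋆⋆(𝔇 ⊙ t⊗t)_{abcd}, where (k ⊙ h)_{abcd} = k_{ac} h_{bd} − k_{ad} h_{bc} + h_{ac} k_{bd} − h_{ad} k_{bc} is the Kulkarni–Nomizu product of two rank-2 tensors. -/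

import Mathlib

noncomputable section

/-- The Minkowski metric `η = diag(+1,−1,−1,−1)` on `ℝ⁴`.  Its inverse has the
same components, so `mink` is also used to raise indices. -/
def mink : Fin 4 → Fin 4 → ℝ :=
  fun a b => if a = b then (if a = 0 then 1 else -1) else 0

/-- The totally antisymmetric Levi-Civita tensor with all indices down and
`ε₀₁₂₃ = +1`, via the Vandermonde-product formula. -/
def lev : Fin 4 → Fin 4 → Fin 4 → Fin 4 → ℝ :=
  fun a b c d =>
    (((b : ℕ) : ℝ) - ((a : ℕ) : ℝ)) * (((c : ℕ) : ℝ) - ((a : ℕ) : ℝ)) *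
    (((d : ℕ) : ℝ) - ((a : ℕ) : ℝ)) * (((c : ℕ) : ℝ) - ((b : ℕ) : ℝ)) *
    (((d : ℕ) : ℝ) - ((b : ℕ) : ℝ)) * (((d : ℕ) : ℝ) - ((c : ℕ) : ℝ)) / 12

/-- `ε_{ab}{}^{pq}`: the Levi-Civita tensor with its last two indices raised
by the Minkowski metric. -/
def levUp (a b p q : Fin 4) : ℝ := ∑ r, ∑ s, mink p r * mink q s * lev a b r s

/-- The Kronecker delta on `Fin 4`. -/
def kd (a b : Fin 4) : ℝ := if a = b then 1 else 0

/-- Hodge dual `⋆F_{ab} = (1/2) ε_{ab}{}^{pq} F_{pq}` of a rank-2 tensor. -/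
def hodge2 (F : Fin 4 → Fin 4 → ℝ) (a b : Fin 4) : ℝ :=
  (1/2) * ∑ p, ∑ q, levUp a b p q * F p q

/-- Left Hodge dual `←⋆X_{abcd} = (1/2) ε_{ab}{}^{pq} X_{pqcd}`. -/
def leftD (X : Fin 4 → Fin 4 → Fin 4 → Fin 4 → ℝ) (a b c d : Fin 4) : ℝ :=
  (1/2) * ∑ p, ∑ q, levUp a b p q * X p q c d

/-- Right Hodge dual `→⋆X_{abcd} = (1/2) ε_{cd}{}^{pq} X_{abpq}`. -/
def rightD (X : Fin 4 → Fin 4 → Fin 4 → Fin 4 → ℝ) (a b c d : Fin 4) : ℝ :=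
  (1/2) * ∑ p, ∑ q, levUp c d p q * X a b p q

/-- Double Hodge dual `⋆⋆X_{abcd} = (1/4) ε_{ab}{}^{pq} ε_{cd}{}^{rs} X_{pqrs}`. -/
def dblD (X : Fin 4 → Fin 4 → Fin 4 → Fin 4 → ℝ) (a b c d : Fin 4) : ℝ :=
  (1/4) * ∑ p, ∑ q, ∑ r, ∑ s, levUp a b p q * levUp c d r s * X p q r s

/-- First trace `X_{ac} = η^{bd} X_{abcd}` of a (2,2) double form. -/
def tr1 (X : Fin 4 → Fin 4 → Fin 4 → Fin 4 → ℝ) (a c : Fin 4) : ℝ :=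
  ∑ b, ∑ d, mink b d * X a b c d

/-- Second trace `X = η^{ac} X_{ac}` of a (2,2) double form. -/
def tr2 (X : Fin 4 → Fin 4 → Fin 4 → Fin 4 → ℝ) : ℝ :=
  ∑ a, ∑ c, mink a c * tr1 X a c

/-- Hatted (trace-free) tensor `X̂_{ab} = X_{ab} − (1/4) X η_{ab}`. -/
def hatT (X : Fin 4 → Fin 4 → Fin 4 → Fin 4 → ℝ) (a b : Fin 4) : ℝ :=
  tr1 X a b - (1/4) * tr2 X * mink a b

/-- Rank-2 tensor with both indices raised by the Minkowski metric. -/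
def up2 (F : Fin 4 → Fin 4 → ℝ) (a b : Fin 4) : ℝ :=
  ∑ p, ∑ q, mink a p * mink b q * F p q

/-- Rank-4 tensor with all indices raised by the Minkowski metric. -/
def up4 (X : Fin 4 → Fin 4 → Fin 4 → Fin 4 → ℝ) (a b c d : Fin 4) : ℝ :=
  ∑ p, ∑ q, ∑ r, ∑ s, mink a p * mink b q * mink c r * mink d s * X p q r s

/-- Kulkarni–Nomizu product of two rank-2 tensors. -/
def kn (k h : Fin 4 → Fin 4 → ℝ) (a b c d : Fin 4) : ℝ :=
  k a c * h b d - k a d * h b c + h a c * k b d - h a d * k b c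

/-- The vector `t` with its index lowered by the Minkowski metric. -/
def tlow (t : Fin 4 → ℝ) (a : Fin 4) : ℝ := ∑ p, mink a p * t p

/-- `𝔄_{ac} = X_{abcd} t^b t^d`. -/
def frakA (X : Fin 4 → Fin 4 → Fin 4 → Fin 4 → ℝ) (t : Fin 4 → ℝ) (a c : Fin 4) : ℝ :=
  ∑ b, ∑ d, X a b c d * t b * t d

/-- `𝔅_{ac} = −(→⋆X)_{abcd} t^b t^d`. -/
def frakB (X : Fin 4 → Fin 4 → Fin 4 → Fin 4 → ℝ) (t : Fin 4 → ℝ) (a c : Fin 4) : ℝ :=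
  -∑ b, ∑ d, rightD X a b c d * t b * t d

/-- `ℭ_{ac} = −(←⋆X)_{abcd} t^b t^d`. -/
def frakC (X : Fin 4 → Fin 4 → Fin 4 → Fin 4 → ℝ) (t : Fin 4 → ℝ) (a c : Fin 4) : ℝ :=
  -∑ b, ∑ d, leftD X a b c d * t b * t d

/-- `𝔇_{ac} = (⋆⋆X)_{abcd} t^b t^d`. -/
def frakD (X : Fin 4 → Fin 4 → Fin 4 → Fin 4 → ℝ) (t : Fin 4 → ℝ) (a c : Fin 4) : ℝ :=
  ∑ b, ∑ d, dblD X a b c d * t b * t d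

/-- The electric part `F_{ap} t^p t_b − F_{bp} t^p t_a` of a rank-2 tensor along `t`. -/
def electric (t : Fin 4 → ℝ) (F : Fin 4 → Fin 4 → ℝ) (a b : Fin 4) : ℝ :=
  (∑ p, F a p * t p) * tlow t b - (∑ p, F b p * t p) * tlow t a

/-- The electric part of `X` taken in its first pair of indices. -/
def leftE (t : Fin 4 → ℝ) (X : Fin 4 → Fin 4 → Fin 4 → Fin 4 → ℝ) (a b c d : Fin 4) : ℝ :=
  electric t (fun p q => X p q c d) a b

/-- The electric part of `X` taken in its second pair of indices. -/
def rightE (t : Fin 4 → ℝ) (X : Fin 4 → Fin 4 → Fin 4 → Fin 4 → ℝ) (a b c d : Fin 4) : ℝ :=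
  electric t (X a b) c d

theorem levUp_eq (a b p q : Fin 4) : levUp a b p q = mink p p * mink q q * lev a b p q := by
  have h : ∀ p r, r ≠ p → mink p r = 0 := fun p r hr => if_neg hr.symm
  rw [levUp, Finset.sum_eq_single p, Finset.sum_eq_single q]
  · intro s _ hs
    simp [h q s hs]
  · simp
  · intro r _ hr
    simp [h p r hr]
  · simp

theorem hodge2_antisymm (F : Fin 4 → Fin 4 → ℝ) (a b : Fin 4) :
    hodge2 F a b = -hodge2 F b a := by
  have h : ∀ p q, levUp a b p q = -levUp b a p q := fun p q => by
    simp only [levUp_eq, lev]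
    ring
  simp only [hodge2, h, neg_mul, Finset.sum_neg_distrib, mul_neg]

theorem eq_zero_of_antisymm {F : Fin 4 → Fin 4 → ℝ} (hF : ∀ a b, F a b = -F b a) (a : Fin 4) :
    F a a = 0 := by
  linarith [hF a a]

theorem hodge2_components (F : Fin 4 → Fin 4 → ℝ) (hF : ∀ a b, F a b = -F b a) :
    hodge2 F 0 1 = F 2 3 ∧ hodge2 F 0 2 = -F 1 3 ∧ hodge2 F 0 3 = F 1 2 ∧
      hodge2 F 1 2 = -F 0 3 ∧ hodge2 F 1 3 = F 0 2 ∧ hodge2 F 2 3 = -F 0 1 := by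
  refine ⟨?_, ?_, ?_, ?_, ?_, ?_⟩ <;>
    simp [hodge2, levUp_eq, lev, mink, Fin.sum_univ_four, hF 1 0, hF 2 0, hF 3 0, hF 2 1, hF 3 1,
      hF 3 2] <;> ring

theorem electric_antisymm (t : Fin 4 → ℝ) (F : Fin 4 → Fin 4 → ℝ) (a b : Fin 4) :
    electric t F a b = -electric t F b a := by
  simp only [electric]
  ring

/-- Electric-magnetic decomposition of a 2-form along `t`. -/
theorem electric_sub_hodge2_electric_hodge2 (t : Fin 4 → ℝ) (F : Fin 4 → Fin 4 → ℝ)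
    (hF : ∀ a b, F a b = -F b a) (a b : Fin 4) :
    (∑ q, ∑ s, mink q s * t q * t s) * F a b =
      electric t F a b - hodge2 (electric t (hodge2 F)) a b := by
  have hS := hodge2_antisymm F
  have hSd := eq_zero_of_antisymm hS
  obtain ⟨s01, s02, s03, s12, s13, s23⟩ := hodge2_components F hF
  obtain ⟨e01, e02, e03, e12, e13, e23⟩ :=
    hodge2_components (electric t (hodge2 F)) (electric_antisymm t _)
  have hd := eq_zero_of_antisymm hF
  wlog hab : a ≤ b generalizing a b
  · rw [hF a b, electric_antisymm, hodge2_antisymm, mul_neg, this b a (le_of_not_ge hab)]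
    ring
  have hlow : tlow t 0 = t 0 ∧ tlow t 1 = -t 1 ∧ tlow t 2 = -t 2 ∧ tlow t 3 = -t 3 := by
    simp [tlow, mink]
  obtain ⟨t0, t1, t2, t3⟩ := hlow
  have hQ : (∑ q, ∑ s, mink q s * t q * t s) = t 0 ^ 2 - t 1 ^ 2 - t 2 ^ 2 - t 3 ^ 2 := by
    simp [mink, Fin.sum_univ_four]
    ring
  rw [hQ]
  rcases hab.eq_or_lt with rfl | hab
  · rw [hd, eq_zero_of_antisymm (electric_antisymm t F), eq_zero_of_antisymm (hodge2_antisymm _)]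
    ring
  fin_cases a <;> fin_cases b <;> first
    | exact absurd hab (by decide)
    | simp only [Fin.zero_eta, Fin.mk_one, Fin.reduceFinMk, e01, e02, e03, e12, e13, e23]
      simp only [electric, Fin.sum_univ_four, t0, t1, t2, t3, hd, hSd, hF 1 0, hF 2 0, hF 3 0,
        hF 2 1, hF 3 1, hF 3 2, hS 1 0, hS 2 0, hS 3 0, hS 2 1, hS 3 1, hS 3 2, s01, s02, s03,
        s12, s13, s23]
      ring

theorem leftE_sub_leftD_leftE_leftD (t : Fin 4 → ℝ) (X : Fin 4 → Fin 4 → Fin 4 → Fin 4 → ℝ)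
    (hX : ∀ a b c d, X a b c d = -X b a c d) (a b c d : Fin 4) :
    (∑ q, ∑ s, mink q s * t q * t s) * X a b c d =
      leftE t X a b c d - leftD (leftE t (leftD X)) a b c d :=
  electric_sub_hodge2_electric_hodge2 t (fun p q => X p q c d) (fun p q => hX p q c d) a b

theorem rightE_sub_rightD_rightE_rightD (t : Fin 4 → ℝ) (X : Fin 4 → Fin 4 → Fin 4 → Fin 4 → ℝ)
    (hX : ∀ a b c d, X a b c d = -X a b d c) (a b c d : Fin 4) :
    (∑ q, ∑ s, mink q s * t q * t s) * X a b c d =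
      rightE t X a b c d - rightD (rightE t (rightD X)) a b c d :=
  electric_sub_hodge2_electric_hodge2 t (X a b) (hX a b) c d

theorem leftD_rightD (X : Fin 4 → Fin 4 → Fin 4 → Fin 4 → ℝ) :
    leftD (rightD X) = dblD X := by
  funext a b c d
  simp only [leftD, rightD, dblD, Finset.mul_sum]
  refine Finset.sum_congr rfl fun p _ => Finset.sum_congr rfl fun q _ =>
    Finset.sum_congr rfl fun r _ => Finset.sum_congr rfl fun s _ => ?_
  ring

theorem leftD_rightD_comm (X : Fin 4 → Fin 4 → Fin 4 → Fin 4 → ℝ) :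
    leftD (rightD X) = rightD (leftD X) := by
  funext a b c d
  simp only [leftD, rightD, Fin.sum_univ_four]
  ring

theorem leftE_rightD_comm (t : Fin 4 → ℝ) (X : Fin 4 → Fin 4 → Fin 4 → Fin 4 → ℝ) :
    leftE t (rightD X) = rightD (leftE t X) := by
  funext a b c d
  simp only [leftE, electric, rightD, Fin.sum_univ_four]
  ring

theorem leftD_rightE_comm (t : Fin 4 → ℝ) (X : Fin 4 → Fin 4 → Fin 4 → Fin 4 → ℝ) :
    leftD (rightE t X) = rightE t (leftD X) := by
  funext a b c d
  simp only [rightE, electric, leftD, Fin.sum_univ_four]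
  ring

theorem leftE_rightE (t : Fin 4 → ℝ) (X : Fin 4 → Fin 4 → Fin 4 → Fin 4 → ℝ) :
    leftE t (rightE t X) = kn (frakA X t) (fun p q => tlow t p * tlow t q) := by
  funext a b c d
  simp only [leftE, rightE, electric, kn, frakA, Fin.sum_univ_four]
  ring

theorem rightE_antisymm_left (t : Fin 4 → ℝ) (X : Fin 4 → Fin 4 → Fin 4 → Fin 4 → ℝ)
    (hX : ∀ a b c d, X a b c d = -X b a c d) (a b c d : Fin 4) :
    rightE t X a b c d = -rightE t X b a c d := by
  simp only [rightE, electric, hX a b, neg_mul, Finset.sum_neg_distrib]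
  ring

theorem rightD_antisymm_left (X : Fin 4 → Fin 4 → Fin 4 → Fin 4 → ℝ)
    (hX : ∀ a b c d, X a b c d = -X b a c d) (a b c d : Fin 4) :
    rightD X a b c d = -rightD X b a c d := by
  simp only [rightD, hX a b, mul_neg, Finset.sum_neg_distrib]

theorem kn_neg_left (k h : Fin 4 → Fin 4 → ℝ) : kn (-k) h = -kn k h := by
  funext a b c d
  simp only [kn, Pi.neg_apply]
  ring

theorem leftD_neg (X : Fin 4 → Fin 4 → Fin 4 → Fin 4 → ℝ) : leftD (-X) = -leftD X := by
  funext a b c d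
  simp only [leftD, Pi.neg_apply, mul_neg, Finset.sum_neg_distrib]

theorem rightD_neg (X : Fin 4 → Fin 4 → Fin 4 → Fin 4 → ℝ) : rightD (-X) = -rightD X := by
  funext a b c d
  simp only [rightD, Pi.neg_apply, mul_neg, Finset.sum_neg_distrib]

/-- Generalised Bel–Matte decomposition of an arbitrary (2,2) double form with
respect to an arbitrary non-lightlike vector `t`. -/
theorem bel_matte_decomposition (X : Fin 4 → Fin 4 → Fin 4 → Fin 4 → ℝ)
    (h1 : ∀ a b c d, X a b c d = -X b a c d)
    (h2 : ∀ a b c d, X a b c d = -X a b d c)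
    (t : Fin 4 → ℝ) (ht : (∑ q, ∑ s, mink q s * t q * t s) ≠ 0) :
    ∀ a b c d,
      (∑ q, ∑ s, mink q s * t q * t s) ^ 2 * X a b c d =
        kn (frakA X t) (fun p q => tlow t p * tlow t q) a b c d +
        rightD (kn (frakB X t) (fun p q => tlow t p * tlow t q)) a b c d +
        leftD (kn (frakC X t) (fun p q => tlow t p * tlow t q)) a b c d +
        dblD (kn (frakD X t) (fun p q => tlow t p * tlow t q)) a b c d := by
  intro a b c d
  have hB : frakB X t = -frakA (rightD X) t := rfl
  have hC : frakC X t = -frakA (leftD X) t := rfl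
  have hD : frakD X t = frakA (leftD (rightD X)) t := by rw [leftD_rightD]; rfl
  have hR := rightE_sub_rightD_rightE_rightD t X h2 a b c d
  have hY := leftE_sub_leftD_leftE_leftD t (rightE t X) (rightE_antisymm_left t X h1) a b c d
  have hZ := leftE_sub_leftD_leftE_leftD t (rightD (rightE t (rightD X)))
    (rightD_antisymm_left _ (rightE_antisymm_left t _ (rightD_antisymm_left X h1))) a b c d
  rw [leftD_rightE_comm, leftE_rightE, leftE_rightE] at hY
  rw [leftD_rightD_comm, leftE_rightD_comm, leftE_rightD_comm, leftD_rightE_comm, leftE_rightE,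
    leftE_rightE, leftD_rightD] at hZ
  rw [hB, hC, hD, kn_neg_left, kn_neg_left, leftD_neg, rightD_neg, sq, mul_assoc, hR, mul_sub,
    hY, hZ]
  simp only [Pi.neg_apply]
  ring
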